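/- For every integer n ≥ 0, the value of the rescaled Atkin polynomial at 0 is 𝓐_{n+1}(0) = (−1)^n·(−5/12)·((11/12)_n·(17/12)_n)/(2n+1)!. -/

import Mathlib

noncomputable section

/-- Rising factorial (Pochhammer symbol) `(a)_n = a(a+1)⋯(a+n-1)`. -/
def poch (a : ℝ) (n : ℕ) : ℝ := ∏ i ∈ Finset.range n, (a + (i : ℝ))

/-- The rescaled Atkin polynomials `𝓐_n`. -/
def Atkin : ℕ → ℝ → ℝ
  | 0, _ => 1
  | 1, x => x - 5/12
  | 2, x => x^2 - (205/216) * x + 935/10368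
  | n + 3, x =>
      (x - 2 * (((n : ℝ) + 2)^2 - 29/144) / (4 * ((n : ℝ) + 2)^2 - 1)) * Atkin (n + 2) x
      - ((((n : ℝ) + 2) - 13/12) * (((n : ℝ) + 2) - 7/12) * (((n : ℝ) + 2) - 5/12)
          * (((n : ℝ) + 2) + 1/12)
         / (2 * ((n : ℝ) + 2) * (2 * ((n : ℝ) + 2) - 1)^2 * (2 * ((n : ℝ) + 2) - 2)))
        * Atkin (n + 1) x

/-!
At `x = 0` the three-term recurrence reads `u (n + 2) = -(s n + r (n + 1)) u (n + 1) - r n s n u n`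
for `u n = 𝓐_{n+1}(0)`, where `r` and `s` interlace to form the coefficients of a Stieltjes
continued fraction. It is equivalent to
`u (n + 2) + r (n + 1) u (n + 1) = -s n (u (n + 1) + r n u n)`, so `u (n + 1) + r n u n` vanishes
for all `n` as soon as it does for `n = 0`. Hence `u` is a hypergeometric sequence with ratio
`-r n`.
-/

theorem eq_neg_mul_of_factored_recurrence {R : Type*} [CommRing R] {u r s : ℕ → R}
    (h_init : u 1 = -r 0 * u 0)
    (h_rec : ∀ n, u (n + 2) = -(s n + r (n + 1)) * u (n + 1) - r n * s n * u n) (n : ℕ) :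
    u (n + 1) = -r n * u n := by
  induction n with
  | zero => exact h_init
  | succ n ih =>
    calc u (n + 2) = -r (n + 1) * u (n + 1) - s n * (u (n + 1) + r n * u n) := by
          rw [h_rec]; ring
      _ = -r (n + 1) * u (n + 1) := by rw [ih]; ring

theorem poch_zero (a : ℝ) : poch a 0 = 1 := Finset.prod_range_zero _

theorem poch_succ (a : ℝ) (n : ℕ) : poch a (n + 1) = poch a n * (a + n) :=
  Finset.prod_range_succ _ n

theorem cast_factorial_two_mul_succ_add_one {R : Type*} [CommSemiring R] (n : ℕ) :
    ((2 * (n + 1) + 1).factorial : R) = (2 * n + 2) * (2 * n + 3) * (2 * n + 1).factorial := by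
  rw [show 2 * (n + 1) + 1 = 2 * n + 1 + 1 + 1 by ring, Nat.factorial_succ, Nat.factorial_succ]
  push_cast
  ring

theorem eq_poch_mul_poch_div_factorial {a b : ℝ} {u : ℕ → ℝ}
    (h : ∀ n : ℕ, u (n + 1) = -((a + n) * (b + n) / ((2 * n + 2) * (2 * n + 3))) * u n) (n : ℕ) :
    u n = (-1) ^ n * u 0 * (poch a n * poch b n) / (2 * n + 1).factorial := by
  induction n with
  | zero => simp [poch_zero]
  | succ n ih =>
    rw [h, ih, poch_succ, poch_succ, cast_factorial_two_mul_succ_add_one, pow_succ]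
    field_simp

/-- The coefficients `λ_{2n+3} / 1728` of odd index in the Stieltjes continued fraction associated
with the Atkin polynomials, where `λ_k = 12 (6 + (-1)^k / (k - 1)) (6 + (-1)^k / k)` for `k > 1`. -/
def atkinOddCoeff (n : ℕ) : ℝ := (11 / 12 + n) * (17 / 12 + n) / ((2 * n + 2) * (2 * n + 3))

/-- The coefficients `λ_{2n+4} / 1728` of even index in the same continued fraction, with `λ_k` as
for `atkinOddCoeff`. -/
def atkinEvenCoeff (n : ℕ) : ℝ := (19 / 12 + n) * (25 / 12 + n) / ((2 * n + 3) * (2 * n + 4))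

theorem atkinEvenCoeff_add_atkinOddCoeff_succ (n : ℕ) :
    atkinEvenCoeff n + atkinOddCoeff (n + 1) =
      2 * (((n : ℝ) + 2) ^ 2 - 29 / 144) / (4 * ((n : ℝ) + 2) ^ 2 - 1) := by
  have h_denom : 4 * ((n : ℝ) + 2) ^ 2 - 1 = (2 * n + 3) * (2 * n + 5) := by ring
  have h_succ : (2 * ((n : ℝ) + 1) + 3) = 2 * n + 5 := by ring
  rw [atkinEvenCoeff, atkinOddCoeff, h_denom, Nat.cast_add_one, h_succ]
  field_simp
  ring

theorem atkinOddCoeff_mul_atkinEvenCoeff (n : ℕ) :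
    atkinOddCoeff n * atkinEvenCoeff n =
      (((n : ℝ) + 2) - 13 / 12) * (((n : ℝ) + 2) - 7 / 12) * (((n : ℝ) + 2) - 5 / 12)
          * (((n : ℝ) + 2) + 1 / 12)
        / (2 * ((n : ℝ) + 2) * (2 * ((n : ℝ) + 2) - 1) ^ 2 * (2 * ((n : ℝ) + 2) - 2)) := by
  rw [atkinOddCoeff, atkinEvenCoeff, div_mul_div_comm]
  congr 1 <;> ring

theorem atkin_add_three (n : ℕ) (x : ℝ) :
    Atkin (n + 3) x = (x - (atkinEvenCoeff n + atkinOddCoeff (n + 1))) * Atkin (n + 2) x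
      - atkinOddCoeff n * atkinEvenCoeff n * Atkin (n + 1) x := by
  rw [Atkin, atkinEvenCoeff_add_atkinOddCoeff_succ, atkinOddCoeff_mul_atkinEvenCoeff]

theorem atkin_add_two_zero (n : ℕ) :
    Atkin (n + 2) 0 = -atkinOddCoeff n * Atkin (n + 1) 0 := by
  refine eq_neg_mul_of_factored_recurrence (u := fun n ↦ Atkin (n + 1) 0) (s := atkinEvenCoeff)
    ?_ (fun n ↦ ?_) n
  · norm_num [Atkin, atkinOddCoeff]
  · simpa only [zero_sub] using atkin_add_three n 0

theorem atkin_at_zero (n : ℕ) :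
    Atkin (n + 1) 0 =
      (-1 : ℝ)^n * (-(5:ℝ)/12) * (poch (11/12) n * poch (17/12) n)
        / (Nat.factorial (2*n + 1) : ℝ) := by
  have h_init : Atkin 1 0 = -(5 : ℝ) / 12 := by norm_num [Atkin]
  rw [← h_init]
  exact eq_poch_mul_poch_div_factorial (u := fun n ↦ Atkin (n + 1) 0) atkin_add_two_zero n
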